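/- arXiv:1701.06244 — 2 statements merged into one kernel-verified Lean document; each statement's English description precedes it below -/
import Mathlib

section
/- Let p ∈ ℕ ∪ {∞}. Every morphism h : l₁ → l₂ of □_p factors as a surjection followed by an inclusion: h = ι ∘ s where (i) s : l₁ → m is a composite of face maps and is surjective onto non-error values, i.e., for every j ∈ Fin m there exists i ∈ Fin l₁ with s(i) = Sum.inl j, and (ii) ι : m → l₂ is a composite of degeneracies and is error-free and order-preserving injective, i.e., ι = Sum.inl ∘ u for a strictly monotone function u : Fin m → Fin l₂. -/
/-- Kleisli composition with error propagation: `(kcomp g f) i = g j` if `f i = Sum.inl j`,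
and `Sum.inr ⋆` if `f i = Sum.inr ⋆`. -/
def kcomp {l₁ l₂ l₃ : ℕ} (g : Fin l₂ → Fin l₃ ⊕ Bool) (f : Fin l₁ → Fin l₂ ⊕ Bool) :
    Fin l₁ → Fin l₃ ⊕ Bool := fun i =>
  match f i with
  | Sum.inl j => g j
  | Sum.inr b => Sum.inr b

/-- The face map `f_⋆(l,k) : l+1 → l` in the category `□`. -/
def faceMap (b : Bool) (l k : ℕ) (hk : k ≤ l) : Fin (l + 1) → Fin l ⊕ Bool := fun i =>
  if h1 : (i : ℕ) < k then Sum.inl ⟨i, by omega⟩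
  else if h2 : (i : ℕ) = k then Sum.inr b
  else Sum.inl ⟨(i : ℕ) - 1, by have := i.isLt; omega⟩

/-- The degeneracy `d(l,k) : l → l+1` in the category `□`. -/
def degenMap (l k : ℕ) : Fin l → Fin (l + 1) ⊕ Bool := fun i =>
  if (i : ℕ) < k then Sum.inl ⟨i, by have := i.isLt; omega⟩
  else Sum.inl ⟨(i : ℕ) + 1, by have := i.isLt; omega⟩

/-- Membership in the subcategory `□_p` of `□` (for `p ∈ ℕ ∪ {∞}`): `BoxP p l₁ l₂ h` says
that `h : Fin l₁ → Fin l₂ ⊕ Bool` is a morphism `l₁ → l₂` of `□_p`, i.e. is generated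
under identities and composition by the face maps `f_⋆(l,k)` for `⋆ ∈ Bool`, `k ≤ l < p`
and the degeneracies `d(l,k)` for `k ≤ l < p`. -/
inductive BoxP (p : ℕ∞) : ∀ (l₁ l₂ : ℕ), (Fin l₁ → Fin l₂ ⊕ Bool) → Prop
  | id (l : ℕ) (hl : (l : ℕ∞) ≤ p) : BoxP p l l Sum.inl
  | face (b : Bool) (l k : ℕ) (hk : k ≤ l) (hl : (l : ℕ∞) < p) :
      BoxP p (l + 1) l (faceMap b l k hk)
  | degen (l k : ℕ) (hk : k ≤ l) (hl : (l : ℕ∞) < p) :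
      BoxP p l (l + 1) (degenMap l k)
  | comp {l₁ l₂ l₃ : ℕ} {f : Fin l₁ → Fin l₂ ⊕ Bool} {g : Fin l₂ → Fin l₃ ⊕ Bool} :
      BoxP p l₁ l₂ f → BoxP p l₂ l₃ g → BoxP p l₁ l₃ (kcomp g f)

/-- `FaceComp p l₁ l₂ s L` says that `s : l₁ → l₂` is the composite of the list `L` of face
maps of `□_p`, where `L` records, in order of application (right to left in composition
order), the labels `⋆ ∈ Bool` and second arguments `k` of the face maps. -/
inductive FaceComp (p : ℕ∞) : ∀ (l₁ l₂ : ℕ), (Fin l₁ → Fin l₂ ⊕ Bool) → List (Bool × ℕ) → Prop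
  | nil (l : ℕ) (hl : (l : ℕ∞) ≤ p) : FaceComp p l l Sum.inl []
  | cons {l m : ℕ} {f : Fin l → Fin m ⊕ Bool} {L : List (Bool × ℕ)}
      (b : Bool) (k : ℕ) (hk : k ≤ l) (hl : (l : ℕ∞) < p) :
      FaceComp p l m f L → FaceComp p (l + 1) m (kcomp f (faceMap b l k hk)) ((b, k) :: L)

/-- `DegenComp p l₁ l₂ ι L` says that `ι : l₁ → l₂` is the composite of the list `L` of
degeneracies of `□_p`, where `L` records, in order of application (right to left in
composition order), the second arguments `k` of the degeneracies. -/
inductive DegenComp (p : ℕ∞) : ∀ (l₁ l₂ : ℕ), (Fin l₁ → Fin l₂ ⊕ Bool) → List ℕ → Prop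
  | nil (l : ℕ) (hl : (l : ℕ∞) ≤ p) : DegenComp p l l Sum.inl []
  | cons {m l : ℕ} {g : Fin m → Fin l ⊕ Bool} {L : List ℕ}
      (k : ℕ) (hk : k ≤ l) (hl : (l : ℕ∞) < p) :
      DegenComp p m l g L → DegenComp p m (l + 1) (kcomp (degenMap l k) g) (L ++ [k])

theorem kcomp_assoc' {a b c d : ℕ} (h : Fin c → Fin d ⊕ Bool) (g : Fin b → Fin c ⊕ Bool)
    (f : Fin a → Fin b ⊕ Bool) : kcomp h (kcomp g f) = kcomp (kcomp h g) f := by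
  funext i
  simp only [kcomp]
  cases f i <;> rfl

theorem kcomp_id_left {a b : ℕ} (f : Fin a → Fin b ⊕ Bool) : kcomp Sum.inl f = f := by
  funext i
  simp only [kcomp]
  cases f i <;> rfl

theorem kcomp_id_right {a b : ℕ} (f : Fin a → Fin b ⊕ Bool) : kcomp f Sum.inl = f := rfl

theorem FaceComp.trans' {p : ℕ∞} {a b c : ℕ} {f : Fin a → Fin b ⊕ Bool}
    {g : Fin b → Fin c ⊕ Bool} {L L' : List (Bool × ℕ)} (hf : FaceComp p a b f L)
    (hg : FaceComp p b c g L') : FaceComp p a c (kcomp g f) (L ++ L') := by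
  induction hf with
  | nil l hl => exact hg
  | cons b k hk hl _ ih =>
    rw [kcomp_assoc']
    exact FaceComp.cons b k hk hl (ih hg)

theorem FaceComp.surj {p : ℕ∞} {a b : ℕ} {f : Fin a → Fin b ⊕ Bool}
    {L : List (Bool × ℕ)} (hf : FaceComp p a b f L) :
    ∀ j : Fin b, ∃ i : Fin a, f i = Sum.inl j := by
  induction hf with
  | nil l hl => exact fun j => ⟨j, rfl⟩
  | @cons l m f L b k hk hl _ ih =>
    intro j
    obtain ⟨i, hi⟩ := ih j
    have : ∃ i' : Fin (l + 1), faceMap b l k hk i' = Sum.inl i := by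
      by_cases h : (i : ℕ) < k
      · refine ⟨⟨i, by omega⟩, ?_⟩
        simp [faceMap, h]
      · refine ⟨⟨i + 1, by omega⟩, ?_⟩
        have h1 : ¬ (i : ℕ) + 1 < k := by omega
        have h2 : ¬ (i : ℕ) + 1 = k := by omega
        simp [faceMap, h1, h2]
    obtain ⟨i', hi'⟩ := this
    exact ⟨i', by simp [kcomp, hi', hi]⟩

theorem DegenComp.mono {p : ℕ∞} {a b : ℕ} {f : Fin a → Fin b ⊕ Bool}
    {L : List ℕ} (hf : DegenComp p a b f L) :
    ∃ u : Fin a → Fin b, StrictMono u ∧ f = fun i => Sum.inl (u i) := by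
  induction hf with
  | nil hl => exact ⟨fun i => i, fun _ _ h => h, rfl⟩
  | @cons l g L k hk hl _ ih =>
    obtain ⟨u, hu, rfl⟩ := ih
    refine ⟨fun i => if (u i : ℕ) < k then ⟨u i, by omega⟩ else ⟨u i + 1, by omega⟩, ?_, ?_⟩
    · intro i j hij
      have := hu hij
      simp only [Fin.lt_def] at this ⊢
      split_ifs <;> simp <;> omega
    · funext i
      simp only [kcomp, degenMap]
      split_ifs <;> rfl

theorem face_degen_eq (b : Bool) (l k : ℕ) (hk : k ≤ l) :
    kcomp (faceMap b l k hk) (degenMap l k) = Sum.inl := by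
  funext i
  by_cases h : (i : ℕ) < k
  · simp [kcomp, degenMap, faceMap, h]
  · have h1 : ¬ (i : ℕ) + 1 < k := by omega
    have h2 : ¬ (i : ℕ) + 1 = k := by omega
    simp [kcomp, degenMap, faceMap, h, h1, h2]

theorem face_degen_lt (b : Bool) (l k' k : ℕ) (h : k' ≤ k) (hk : k ≤ l) :
    kcomp (faceMap b (l + 1) k' (by omega)) (degenMap (l + 1) (k + 1)) =
      kcomp (degenMap l k) (faceMap b l k' (by omega)) := by
  funext i
  simp only [kcomp, degenMap, faceMap]
  grind

theorem face_degen_gt (b : Bool) (l k' k : ℕ) (h : k ≤ k') (hk : k' ≤ l) :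
    kcomp (faceMap b (l + 1) (k' + 1) (by omega)) (degenMap (l + 1) k) =
      kcomp (degenMap l k) (faceMap b l k' (by omega)) := by
  funext i
  simp only [kcomp, degenMap, faceMap]
  grind

theorem face_degenComp {p : ℕ∞} {m n : ℕ} {f : Fin m → Fin n ⊕ Bool} {L : List ℕ}
    (hf : DegenComp p m n f L) : ∀ (l : ℕ) (e : n = l + 1) (b : Bool) (k : ℕ) (hk : k ≤ l),
    (l : ℕ∞) < p → ∃ (m' : ℕ) (Lf : List (Bool × ℕ)) (Ld : List ℕ)
      (s : Fin m → Fin m' ⊕ Bool) (ι : Fin m' → Fin l ⊕ Bool),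
      FaceComp p m m' s Lf ∧ DegenComp p m' l ι Ld ∧
        kcomp (fun i => faceMap b l k hk (Fin.cast e i)) f = kcomp ι s := by
  induction hf with
  | nil hl' =>
    intro l e b k hk hl
    subst e
    exact ⟨l, _, _, _, _, FaceComp.cons b k hk hl (FaceComp.nil l hl.le), DegenComp.nil l hl.le,
      by rw [kcomp_id_left, kcomp_id_left]; rfl⟩
  | @cons l' g L k' hk' hl' hg ih =>
    intro l e b k hk hl
    obtain rfl : l' = l := by omega
    have hm : (m : ℕ∞) ≤ p := by
      obtain ⟨u, hu, _⟩ := hg.mono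
      have : m ≤ l' := by simpa using Fintype.card_le_of_injective u hu.injective
      exact (Nat.cast_le.mpr this).trans hl.le
    change ∃ (m' : ℕ) (Lf : List (Bool × ℕ)) (Ld : List ℕ)
      (s : Fin m → Fin m' ⊕ Bool) (ι : Fin m' → Fin l' ⊕ Bool),
      FaceComp p m m' s Lf ∧ DegenComp p m' l' ι Ld ∧
        kcomp (faceMap b l' k hk) _ = kcomp ι s
    rw [kcomp_assoc']
    rcases lt_trichotomy k k' with h | h | h
    · obtain ⟨l, rfl⟩ : ∃ l, l' = l + 1 := ⟨l' - 1, by omega⟩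
      obtain ⟨k', rfl⟩ : ∃ j, k' = j + 1 := ⟨k' - 1, by omega⟩
      have hlp : (l : ℕ∞) < p := lt_of_le_of_lt (by exact_mod_cast Nat.le_succ l) hl
      obtain ⟨m', Lf, Ld, s, ι, h1, h2, h3⟩ := ih l rfl b k (by omega) hlp
      refine ⟨m', _, _, s, _, h1, DegenComp.cons k' (by omega) hlp h2, ?_⟩
      rw [face_degen_lt b l k k' (by omega) (by omega), ← kcomp_assoc', ← kcomp_assoc', ← h3]
      rfl
    · subst h
      rw [face_degen_eq, kcomp_id_left]
      exact ⟨m, _, _, _, _, FaceComp.nil m hm, hg, rfl⟩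
    · obtain ⟨l, rfl⟩ : ∃ l, l' = l + 1 := ⟨l' - 1, by omega⟩
      obtain ⟨k, rfl⟩ : ∃ j, k = j + 1 := ⟨k - 1, by omega⟩
      have hlp : (l : ℕ∞) < p := lt_of_le_of_lt (by exact_mod_cast Nat.le_succ l) hl
      obtain ⟨m', Lf, Ld, s, ι, h1, h2, h3⟩ := ih l rfl b k (by omega) hlp
      refine ⟨m', _, _, s, _, h1, DegenComp.cons k' (by omega) hlp h2, ?_⟩
      rw [face_degen_gt b l k k' (by omega) (by omega), ← kcomp_assoc', ← kcomp_assoc', ← h3]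
      rfl

theorem BoxP.dom_le {p : ℕ∞} {a b : ℕ} {f : Fin a → Fin b ⊕ Bool} (hf : BoxP p a b f) :
    (a : ℕ∞) ≤ p := by
  induction hf with
  | id l hl => exact hl
  | face b l k hk hl => exact_mod_cast Order.add_one_le_of_lt hl
  | degen l k hk hl => exact hl.le
  | comp _ _ ih _ => exact ih

/-- Factorization as a composite of faces followed by a composite of degeneracies. -/
def BoxFac (p : ℕ∞) (l₁ l₂ : ℕ) (h : Fin l₁ → Fin l₂ ⊕ Bool) : Prop :=
  ∃ (m : ℕ) (Lf : List (Bool × ℕ)) (Ld : List ℕ)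
      (s : Fin l₁ → Fin m ⊕ Bool) (ι : Fin m → Fin l₂ ⊕ Bool),
      FaceComp p l₁ m s Lf ∧ DegenComp p m l₂ ι Ld ∧ h = kcomp ι s

theorem BoxP.fac_comp {p : ℕ∞} {a b : ℕ} {g : Fin a → Fin b ⊕ Bool} (hg : BoxP p a b g) :
    ∀ (c : ℕ) (f : Fin c → Fin a ⊕ Bool), BoxFac p c a f → BoxFac p c b (kcomp g f) := by
  induction hg with
  | id l hl => intro c f hf; rwa [kcomp_id_left]
  | face b l k hk hl =>
    rintro c f ⟨m, Lf, Ld, s, ι, h1, h2, rfl⟩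
    obtain ⟨m', Lf', Ld', s', ι', h1', h2', h3'⟩ := face_degenComp h2 l rfl b k hk hl
    refine ⟨m', _, _, _, _, h1.trans' h1', h2', ?_⟩
    rw [kcomp_assoc', kcomp_assoc', ← h3']
    rfl
  | degen l k hk hl =>
    rintro c f ⟨m, Lf, Ld, s, ι, h1, h2, rfl⟩
    exact ⟨m, _, _, _, _, h1, DegenComp.cons k hk hl h2, kcomp_assoc' _ _ _⟩
  | comp _ _ ih1 ih2 =>
    intro c f hf
    rw [← kcomp_assoc']
    exact ih2 _ _ (ih1 _ _ hf)

/-- Every morphism `h : l₁ → l₂` of `□_p` factors as a surjection followed by an inclusion: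
`h = ι ∘ s` where `s` is a composite of face maps that is surjective onto non-error values,
and `ι` is a composite of degeneracies that is error-free and order-preserving injective,
i.e. `ι = Sum.inl ∘ u` for a strictly monotone `u`. -/
theorem boxP_surj_incl_factorization (p : ℕ∞) (l₁ l₂ : ℕ) (h : Fin l₁ → Fin l₂ ⊕ Bool)
    (hh : BoxP p l₁ l₂ h) :
    ∃ (m : ℕ) (Lf : List (Bool × ℕ)) (Ld : List ℕ)
      (s : Fin l₁ → Fin m ⊕ Bool) (ι : Fin m → Fin l₂ ⊕ Bool),
      FaceComp p l₁ m s Lf ∧ DegenComp p m l₂ ι Ld ∧ h = kcomp ι s ∧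
      (∀ j : Fin m, ∃ i : Fin l₁, s i = Sum.inl j) ∧
      ∃ u : Fin m → Fin l₂, StrictMono u ∧ ι = fun i => Sum.inl (u i) := by
  obtain ⟨m, Lf, Ld, s, ι, h1, h2, h3⟩ := hh.fac_comp l₁ Sum.inl
    ⟨l₁, _, _, _, _, FaceComp.nil l₁ hh.dom_le, DegenComp.nil l₁ hh.dom_le, rfl⟩
  exact ⟨m, Lf, Ld, s, ι, h1, h2, h3, h1.surj, h2.mono⟩
end

section
/- Let p ∈ ℕ ∪ {∞}. The category □_p admits the following presentation by generators and relations: let Q be the quiver whose vertices are the levels l ≤ p and whose arrows are formal symbols F_⋆(l,k) : l+1 → l for ⋆ ∈ Bool, k ≤ l < p, and D(l,k) : l → l+1 for k ≤ l < p; let ∼ be the congruence on the free (path) category on Q generated by the five cubical relations (1) F_⋆(l,k) ∘ D(l,k) = id_l for l < p, (2) F_⋆(l,j) ∘ D(l,k) = D(l−1,k) ∘ F_⋆(l−1,j−1) for k < j and l < p, (3) F_⋆(l,j) ∘ D(l,k) = D(l−1,k−1) ∘ F_⋆(l−1,j) for j < k and l < p, (4) D(l+1,j) ∘ D(l,k)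 = D(l+1,k) ∘ D(l,j−1) for k < j and l+1 < p, and (5) F_{⋆₂}(l,j) ∘ F_{⋆₁}(l+1,k) = F_{⋆₁}(l,k) ∘ F_{⋆₂}(l+1,j+1) for k ≤ j and l+1 < p. Then the canonical functor from the free category on Q to □ sending F_⋆(l,k) to the face map f_⋆(l,k) and D(l,k) to the degeneracy d(l,k) identifies ∼-related paths, and the induced functor from the quotient category (free category on Q modulo ∼) to □ is faithful, with image the subcategory □_p. -/
open CategoryTheory

theorem kcomp_inl {l₁ l₂ : ℕ} (f : Fin l₁ → Fin l₂ ⊕ Bool) : kcomp Sum.inl f = f := by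
  funext i; unfold kcomp; cases f i <;> rfl

theorem kcomp_assoc {l₁ l₂ l₃ l₄ : ℕ} (h : Fin l₃ → Fin l₄ ⊕ Bool)
    (g : Fin l₂ → Fin l₃ ⊕ Bool) (f : Fin l₁ → Fin l₂ ⊕ Bool) :
    kcomp (kcomp h g) f = kcomp h (kcomp g f) := by
  funext i; unfold kcomp; cases f i <;> rfl

/-- The category `□`: objects are natural numbers, morphisms `l₁ ⟶ l₂` are functions
`Fin l₁ → Fin l₂ ⊕ Bool`, identity is `Sum.inl`, composition is Kleisli composition with
error propagation. -/
def BoxCat : Type := ℕ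

instance : CategoryStruct BoxCat where
  Hom l₁ l₂ := Fin l₁ → Fin l₂ ⊕ Bool
  id _ := Sum.inl
  comp f g := kcomp g f

instance : Category BoxCat where
  id_comp _ := rfl
  comp_id f := kcomp_inl f
  assoc f g h := (kcomp_assoc h g f).symm

theorem succ_le_of_lt' {p : ℕ∞} {l : ℕ} (h : (l : ℕ∞) < p) : ((l + 1 : ℕ) : ℕ∞) ≤ p := by
  push_cast
  exact Order.add_one_le_of_lt h

/-- The vertices of the quiver `Q`: the levels `l ≤ p`. -/
structure VV (p : ℕ∞) : Type where
  lvl : ℕ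
  le : (lvl : ℕ∞) ≤ p

/-- The arrows of the quiver `Q`: formal symbols `F_⋆(l,k) : l+1 → l` for `⋆ ∈ Bool`,
`k ≤ l < p`, and `D(l,k) : l → l+1` for `k ≤ l < p`. -/
inductive GenArrow (p : ℕ∞) : VV p → VV p → Type
  | F (b : Bool) (l k : ℕ) (hk : k ≤ l) (hl : (l : ℕ∞) < p) :
      GenArrow p ⟨l + 1, succ_le_of_lt' hl⟩ ⟨l, hl.le⟩
  | D (l k : ℕ) (hk : k ≤ l) (hl : (l : ℕ∞) < p) :
      GenArrow p ⟨l, hl.le⟩ ⟨l + 1, succ_le_of_lt' hl⟩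

instance (p : ℕ∞) : Quiver (VV p) := ⟨GenArrow p⟩

/-- The prefunctor sending the vertex `l` to `l`, the formal arrow `F_⋆(l,k)` to the face map
`f_⋆(l,k)` and the formal arrow `D(l,k)` to the degeneracy `d(l,k)`. -/
def genPrefunctor (p : ℕ∞) : VV p ⥤q BoxCat where
  obj x := x.1
  map {X Y} a :=
    match a with
    | GenArrow.F b l k hk _ => faceMap b l k hk
    | GenArrow.D l k _ _ => degenMap l k

/-- The canonical functor from the free (path) category on the quiver `Q` to `□`, sending
`F_⋆(l,k)` to the face map `f_⋆(l,k)` and `D(l,k)` to the degeneracy `d(l,k)`. -/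
def canonicalFunctor (p : ℕ∞) : Paths (VV p) ⥤ BoxCat :=
  Paths.lift (genPrefunctor p)

/-- The formal arrow `F_⋆(l,k)`, as a (length-one) path in the free category on `Q`. -/
def fPath (p : ℕ∞) (b : Bool) (l k : ℕ) (hk : k ≤ l) (hl : (l : ℕ∞) < p) :
    Quiver.Path (⟨l + 1, succ_le_of_lt' hl⟩ : VV p) ⟨l, hl.le⟩ :=
  Quiver.Path.nil.cons (GenArrow.F b l k hk hl)

/-- The formal arrow `D(l,k)`, as a (length-one) path in the free category on `Q`. -/
def dPath (p : ℕ∞) (l k : ℕ) (hk : k ≤ l) (hl : (l : ℕ∞) < p) :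
    Quiver.Path (⟨l, hl.le⟩ : VV p) ⟨l + 1, succ_le_of_lt' hl⟩ :=
  Quiver.Path.nil.cons (GenArrow.D l k hk hl)

/-- The five cubical relations generating the congruence `∼` on the free category on `Q`.
The composite `g ∘ f` (apply `f` first) appears as the path `f.comp g`.
(Relations (2), (3) are stated with `l = m + 1`, which is forced by their side conditions,
so that the levels `l - 1 = m` are handled without natural-number subtraction.) -/
inductive CubeRel (p : ℕ∞) : ∀ {X Y : VV p}, Quiver.Path X Y → Quiver.Path X Y → Prop
  | rel1 (b : Bool) (l k : ℕ) (hk : k ≤ l) (hl : (l : ℕ∞) < p) :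
      CubeRel p ((dPath p l k hk hl).comp (fPath p b l k hk hl))
        (Quiver.Path.nil : Quiver.Path (⟨l, hl.le⟩ : VV p) ⟨l, hl.le⟩)
  | rel2 (b : Bool) (m j k : ℕ) (hkj : k < j) (hj : j ≤ m + 1) (hk1 : k ≤ m + 1)
      (hj1 : j - 1 ≤ m) (hk0 : k ≤ m)
      (hl1 : ((m + 1 : ℕ) : ℕ∞) < p) (hl0 : (m : ℕ∞) < p) :
      CubeRel p
        ((dPath p (m + 1) k hk1 hl1).comp (fPath p b (m + 1) j hj hl1))
        ((fPath p b m (j - 1) hj1 hl0).comp (dPath p m k hk0 hl0))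
  | rel3 (b : Bool) (m j k : ℕ) (hjk : j < k) (hk : k ≤ m + 1) (hj1 : j ≤ m + 1)
      (hk1 : k - 1 ≤ m) (hj0 : j ≤ m)
      (hl1 : ((m + 1 : ℕ) : ℕ∞) < p) (hl0 : (m : ℕ∞) < p) :
      CubeRel p
        ((dPath p (m + 1) k hk hl1).comp (fPath p b (m + 1) j hj1 hl1))
        ((fPath p b m j hj0 hl0).comp (dPath p m (k - 1) hk1 hl0))
  | rel4 (l j k : ℕ) (hkj : k < j) (hj : j ≤ l + 1) (hk : k ≤ l) (hj1 : j - 1 ≤ l)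
      (hk1 : k ≤ l + 1) (hl1 : ((l + 1 : ℕ) : ℕ∞) < p) (hl0 : (l : ℕ∞) < p) :
      CubeRel p
        ((dPath p l k hk hl0).comp (dPath p (l + 1) j hj hl1))
        ((dPath p l (j - 1) hj1 hl0).comp (dPath p (l + 1) k hk1 hl1))
  | rel5 (b₁ b₂ : Bool) (l j k : ℕ) (hkj : k ≤ j) (hj : j ≤ l) (hk : k ≤ l)
      (hk1 : k ≤ l + 1) (hj1 : j + 1 ≤ l + 1)
      (hl1 : ((l + 1 : ℕ) : ℕ∞) < p) (hl0 : (l : ℕ∞) < p) :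
      CubeRel p
        ((fPath p b₁ (l + 1) k hk1 hl1).comp (fPath p b₂ l j hj hl0))
        ((fPath p b₂ (l + 1) (j + 1) hj1 hl1).comp (fPath p b₁ l k hk hl0))

/-- The five cubical relations, as a `HomRel` on the free category on `Q`. -/
def cubeRel (p : ℕ∞) : HomRel (Paths (VV p)) := fun {X Y} f g => @CubeRel p X Y f g

/-- A function `Fin l₁ → Fin l₂ ⊕ Bool`, seen as a morphism `l₁ ⟶ l₂` of `□`. -/
def boxHom {l₁ l₂ : ℕ} (f : Fin l₁ → Fin l₂ ⊕ Bool) :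
    @Quiver.Hom BoxCat _ l₁ l₂ := f
theorem cube_H (p : ℕ∞) : ∀ (X Y : Paths (VV p)) (f g : X ⟶ Y),
    cubeRel p f g → (canonicalFunctor p).map f = (canonicalFunctor p).map g := by
  intro X Y f g h
  cases h with
  | rel1 b l k hk hl =>
    change kcomp (faceMap b l k hk) (degenMap l k) = (Sum.inl : Fin l → Fin l ⊕ Bool)
    funext i
    simp only [kcomp, degenMap, faceMap]
    grind
  | rel2 b m j k hkj hj hk1 hj1 hk0 hl1 hl0 =>
    change kcomp (faceMap b (m + 1) j hj) (degenMap (m + 1) k) =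
      kcomp (degenMap m k) (faceMap b m (j - 1) hj1)
    funext i
    simp only [kcomp, degenMap, faceMap]
    grind
  | rel3 b m j k hjk hk hj1 hk1 hj0 hl1 hl0 =>
    change kcomp (faceMap b (m + 1) j hj1) (degenMap (m + 1) k) =
      kcomp (degenMap m (k - 1)) (faceMap b m j hj0)
    funext i
    simp only [kcomp, degenMap, faceMap]
    grind
  | rel4 l j k hkj hj hk hj1 hk1 hl1 hl0 =>
    change kcomp (degenMap (l + 1) j) (degenMap l k) =
      kcomp (degenMap (l + 1) k) (degenMap l (j - 1))
    funext i
    simp only [kcomp, degenMap]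
    grind
  | rel5 b₁ b₂ l j k hkj hj hk hk1 hj1 hl1 hl0 =>
    change kcomp (faceMap b₂ l j hj) (faceMap b₁ (l + 1) k hk1) =
      kcomp (faceMap b₁ l k hk) (faceMap b₂ (l + 1) (j + 1) hj1)
    funext i
    simp only [kcomp, faceMap]
    grind

namespace CubeAux

variable {p : ℕ∞}

theorem VV_ext {X Y : VV p} (h : X.lvl = Y.lvl) : X = Y := by
  cases X; cases Y; cases h; rfl

theorem VV_lt {X Y : VV p} (h : X.lvl = Y.lvl + 1) : (Y.lvl : ℕ∞) < p := by
  refine lt_of_lt_of_le ?_ X.le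
  rw [h]; exact_mod_cast Nat.lt_succ_self _

/-- A vertex one level lower. -/
theorem VV_pred (X : VV p) (h : 0 < X.lvl) : ∃ Y : VV p, X.lvl = Y.lvl + 1 :=
  ⟨⟨X.lvl - 1, le_trans (by exact_mod_cast Nat.sub_le _ _) X.le⟩,
    by change X.lvl = X.lvl - 1 + 1; omega⟩

/-- The object of the quotient category attached to a vertex. -/
abbrev O (X : VV p) : CategoryTheory.Quotient (cubeRel p) := ⟨X⟩

/-- The face generator in the quotient category. -/
def Fm (b : Bool) (k : ℕ) {X Y : VV p} (e : X.lvl = Y.lvl + 1) (hk : k ≤ Y.lvl) : O X ⟶ O Y :=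
  (Quotient.functor (cubeRel p)).map (X := X) (Y := Y)
    ((Quiver.Path.nil : Quiver.Path X X).cons
      ((VV_ext e : X = ⟨Y.lvl + 1, succ_le_of_lt' (VV_lt e)⟩) ▸
        GenArrow.F b Y.lvl k hk (VV_lt e)))

/-- The degeneracy generator in the quotient category. -/
def Dm (k : ℕ) {X Y : VV p} (e : Y.lvl = X.lvl + 1) (hk : k ≤ X.lvl) : O X ⟶ O Y :=
  (Quotient.functor (cubeRel p)).map (X := X) (Y := Y)
    ((Quiver.Path.nil : Quiver.Path X X).cons
      ((VV_ext e : Y = ⟨X.lvl + 1, succ_le_of_lt' (VV_lt e)⟩) ▸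
        GenArrow.D X.lvl k hk (VV_lt e)))

theorem DF_self (b : Bool) (k : ℕ) {X Y : VV p} (e : Y.lvl = X.lvl + 1) (hk : k ≤ X.lvl) :
    Dm k e hk ≫ Fm b k e hk = 𝟙 (O X) := by
  obtain ⟨l, hl⟩ := X
  obtain ⟨l', hl'⟩ := Y
  obtain rfl : l' = l + 1 := e
  exact CategoryTheory.Quotient.sound (cubeRel p) (CubeRel.rel1 b l k hk (VV_lt (X := ⟨l+1, hl'⟩) (Y := ⟨l, hl⟩) rfl))

theorem DF_lt (b : Bool) (k j : ℕ) {X Y Z V : VV p} (e : Y.lvl = X.lvl + 1)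
    (e' : Y.lvl = Z.lvl + 1) (e1 : X.lvl = V.lvl + 1) (e2 : Z.lvl = V.lvl + 1)
    (hk : k ≤ X.lvl) (hj : j ≤ Z.lvl) (hkj : k < j) (h1 : j - 1 ≤ V.lvl) (h2 : k ≤ V.lvl) :
    Dm k e hk ≫ Fm b j e' hj = Fm b (j - 1) e1 h1 ≫ Dm k e2 h2 := by
  have a1 := VV_lt e
  have a2 := VV_lt e1
  obtain ⟨x, hx⟩ := X
  obtain ⟨y, hy⟩ := Y
  obtain ⟨z, hz⟩ := Z
  obtain ⟨m, hm⟩ := V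
  obtain rfl : x = m + 1 := e1
  obtain rfl : z = m + 1 := e2
  obtain rfl : y = m + 1 + 1 := e
  exact CategoryTheory.Quotient.sound (cubeRel p) (CubeRel.rel2 b m j k hkj hj hk h1 h2 a1 a2)

theorem DF_gt (b : Bool) (k j : ℕ) {X Y Z V : VV p} (e : Y.lvl = X.lvl + 1)
    (e' : Y.lvl = Z.lvl + 1) (e1 : X.lvl = V.lvl + 1) (e2 : Z.lvl = V.lvl + 1)
    (hk : k ≤ X.lvl) (hj : j ≤ Z.lvl) (hkj : j < k) (h1 : j ≤ V.lvl) (h2 : k - 1 ≤ V.lvl) :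
    Dm k e hk ≫ Fm b j e' hj = Fm b j e1 h1 ≫ Dm (k - 1) e2 h2 := by
  have a1 := VV_lt e
  have a2 := VV_lt e1
  obtain ⟨x, hx⟩ := X
  obtain ⟨y, hy⟩ := Y
  obtain ⟨z, hz⟩ := Z
  obtain ⟨m, hm⟩ := V
  obtain rfl : x = m + 1 := e1
  obtain rfl : z = m + 1 := e2
  obtain rfl : y = m + 1 + 1 := e
  exact CategoryTheory.Quotient.sound (cubeRel p) (CubeRel.rel3 b m j k hkj hk hj h2 h1 a1 a2)

theorem DD (k j : ℕ) {X Y Z : VV p} (e : Y.lvl = X.lvl + 1)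
    (e' : Z.lvl = Y.lvl + 1) (hkj : k < j)
    (hk : k ≤ X.lvl) (hj : j ≤ Y.lvl) (h1 : j - 1 ≤ X.lvl) (h2 : k ≤ Y.lvl) :
    Dm k e hk ≫ Dm j e' hj = Dm (j - 1) e h1 ≫ Dm k e' h2 := by
  have a1 := VV_lt e
  have a2 := VV_lt e'
  obtain ⟨x, hx⟩ := X
  obtain ⟨y, hy⟩ := Y
  obtain ⟨z, hz⟩ := Z
  obtain rfl : y = x + 1 := e
  obtain rfl : z = x + 1 + 1 := e'
  exact CategoryTheory.Quotient.sound (cubeRel p) (CubeRel.rel4 x j k hkj hj hk h1 h2 a2 a1)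

theorem FF (b₁ b₂ : Bool) (k j : ℕ) {X Y Z : VV p} (e : X.lvl = Y.lvl + 1)
    (e' : Y.lvl = Z.lvl + 1) (hkj : k ≤ j)
    (hk : k ≤ Y.lvl) (hj : j ≤ Z.lvl) (h1 : j + 1 ≤ Y.lvl) (h2 : k ≤ Z.lvl) :
    Fm b₁ k e hk ≫ Fm b₂ j e' hj = Fm b₂ (j + 1) e h1 ≫ Fm b₁ k e' h2 := by
  have a1 := VV_lt e
  have a2 := VV_lt e'
  obtain ⟨x, hx⟩ := X
  obtain ⟨y, hy⟩ := Y
  obtain ⟨z, hz⟩ := Z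
  obtain rfl : y = z + 1 := e'
  obtain rfl : x = z + 1 + 1 := e
  exact CategoryTheory.Quotient.sound (cubeRel p) (CubeRel.rel5 b₁ b₂ z j k hkj hj h2 hk h1 a1 a2)

/-- Words of given length in the generators. -/
inductive W : ∀ (X Y : VV p), ℕ → (O X ⟶ O Y) → Prop
  | nil (X : VV p) : W X X 0 (𝟙 (O X))
  | face {X Y Z : VV p} {n : ℕ} {w : O X ⟶ O Y} (b : Bool) (k : ℕ) (e : Y.lvl = Z.lvl + 1)
      (hk : k ≤ Z.lvl) : W X Y n w → W X Z (n + 1) (w ≫ Fm b k e hk)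
  | degen {X Y Z : VV p} {n : ℕ} {w : O X ⟶ O Y} (k : ℕ) (e : Z.lvl = Y.lvl + 1)
      (hk : k ≤ Y.lvl) : W X Y n w → W X Z (n + 1) (w ≫ Dm k e hk)

theorem exists_W {X Y : VV p} (u : O X ⟶ O Y) : ∃ n, W X Y n u := by
  refine Quot.inductionOn u ?_
  intro g
  clear u
  change Quiver.Path X Y at g
  change ∃ n, W X Y n ((Quotient.functor (cubeRel p)).map (X := X) (Y := Y) g)
  induction g with
  | nil => exact ⟨0, W.nil X⟩
  | cons g a ih =>
    obtain ⟨n, hn⟩ := ih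
    change GenArrow p _ _ at a
    cases a with
    | F b l k hk hl =>
      have h := W.face (Z := ⟨l, hl.le⟩) b k rfl hk hn
      exact ⟨n + 1, h⟩
    | D l k hk hl =>
      have h := W.degen (Z := ⟨l + 1, succ_le_of_lt' hl⟩) k rfl hk hn
      exact ⟨n + 1, h⟩

/-- The induced functor. -/
abbrev Phi (p : ℕ∞) : CategoryTheory.Quotient (cubeRel p) ⥤ BoxCat :=
  CategoryTheory.Quotient.lift (cubeRel p) (canonicalFunctor p) (cube_H p)

/-- The underlying function. -/
def fn {X Y : VV p} (u : O X ⟶ O Y) : Fin X.lvl → Fin Y.lvl ⊕ Bool := (Phi p).map u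

/-- The function `u` sends `i` to the value `j`. -/
def Hit {X Y : VV p} (u : O X ⟶ O Y) (i j : ℕ) : Prop :=
  ∃ (hi : i < X.lvl) (hj : j < Y.lvl), fn u ⟨i, hi⟩ = Sum.inl ⟨j, hj⟩

/-- The function `u` sends `i` to the error `b`. -/
def Err {X Y : VV p} (u : O X ⟶ O Y) (i : ℕ) (b : Bool) : Prop :=
  ∃ (hi : i < X.lvl), fn u ⟨i, hi⟩ = Sum.inr b

theorem fn_comp {X Y Z : VV p} (u : O X ⟶ O Y) (v : O Y ⟶ O Z) :
    fn (u ≫ v) = kcomp (fn v) (fn u) := (Phi p).map_comp u v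

theorem fn_id (X : VV p) : fn (𝟙 (O X)) = Sum.inl := (Phi p).map_id (O X)

theorem fn_Fm (b : Bool) (k : ℕ) {X Y : VV p} (e : X.lvl = Y.lvl + 1) (hk : k ≤ Y.lvl)
    (i : Fin X.lvl) : fn (Fm b k e hk) i =
      if h1 : (i : ℕ) < k then Sum.inl ⟨i, by omega⟩
      else if h2 : (i : ℕ) = k then Sum.inr b
      else Sum.inl ⟨(i : ℕ) - 1, by have := i.isLt; omega⟩ := by
  obtain ⟨x, hx⟩ := X
  obtain ⟨y, hy⟩ := Y
  obtain rfl : x = y + 1 := e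
  rfl

theorem fn_Dm (k : ℕ) {X Y : VV p} (e : Y.lvl = X.lvl + 1) (hk : k ≤ X.lvl)
    (i : Fin X.lvl) : fn (Dm k e hk) i =
      if (i : ℕ) < k then Sum.inl ⟨i, by have := i.isLt; omega⟩
      else Sum.inl ⟨(i : ℕ) + 1, by have := i.isLt; omega⟩ := by
  obtain ⟨x, hx⟩ := X
  obtain ⟨y, hy⟩ := Y
  obtain rfl : y = x + 1 := e
  rfl

theorem hit_F {X Y Z : VV p} (u : O X ⟶ O Y) (b : Bool) (k : ℕ) (e : Y.lvl = Z.lvl + 1)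
    (hk : k ≤ Z.lvl) (i j : ℕ) : Hit (u ≫ Fm b k e hk) i j ↔
      ∃ j', Hit u i j' ∧ ((j' < k ∧ j = j') ∨ (k < j' ∧ j + 1 = j')) := by
  unfold Hit
  simp only [fn_comp, kcomp]
  constructor
  · rintro ⟨hi, hj, h⟩
    cases hu : fn u ⟨i, hi⟩ with
    | inr b' => simp [hu] at h
    | inl j' =>
      simp only [hu, fn_Fm] at h
      refine ⟨j', ⟨hi, j'.2, hu⟩, ?_⟩
      grind
  · rintro ⟨j', ⟨hi, hj', h⟩, h2⟩
    refine ⟨hi, by omega, ?_⟩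
    simp only [h, fn_Fm]
    grind

theorem hit_D {X Y Z : VV p} (u : O X ⟶ O Y) (k : ℕ) (e : Z.lvl = Y.lvl + 1)
    (hk : k ≤ Y.lvl) (i j : ℕ) : Hit (u ≫ Dm k e hk) i j ↔
      ∃ j', Hit u i j' ∧ ((j' < k ∧ j = j') ∨ (k ≤ j' ∧ j = j' + 1)) := by
  unfold Hit
  simp only [fn_comp, kcomp]
  constructor
  · rintro ⟨hi, hj, h⟩
    cases hu : fn u ⟨i, hi⟩ with
    | inr b' => simp [hu] at h
    | inl j' =>
      simp only [hu, fn_Dm] at h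
      refine ⟨j', ⟨hi, j'.2, hu⟩, ?_⟩
      grind
  · rintro ⟨j', ⟨hi, hj', h⟩, h2⟩
    refine ⟨hi, by omega, ?_⟩
    simp only [h, fn_Dm]
    grind

theorem err_F {X Y Z : VV p} (u : O X ⟶ O Y) (b : Bool) (k : ℕ) (e : Y.lvl = Z.lvl + 1)
    (hk : k ≤ Z.lvl) (i : ℕ) (b' : Bool) : Err (u ≫ Fm b k e hk) i b' ↔
      Err u i b' ∨ (Hit u i k ∧ b = b') := by
  unfold Hit Err
  simp only [fn_comp, kcomp]
  constructor
  · rintro ⟨hi, h⟩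
    cases hu : fn u ⟨i, hi⟩ with
    | inr b' =>
      simp only [hu] at h
      exact Or.inl ⟨hi, hu.trans (by rw [Sum.inr.inj h])⟩
    | inl j' =>
      simp only [hu, fn_Fm] at h
      refine Or.inr ?_
      have : (j' : ℕ) = k := by grind
      refine ⟨⟨hi, by omega, ?_⟩, by grind⟩
      rw [hu]; congr 1; exact Fin.ext this
  · rintro (⟨hi, h⟩ | ⟨⟨hi, hj, h⟩, h2⟩)
    · exact ⟨hi, by simp [h]⟩
    · exact ⟨hi, by simp [h, fn_Fm, h2]⟩

theorem err_D {X Y Z : VV p} (u : O X ⟶ O Y) (k : ℕ) (e : Z.lvl = Y.lvl + 1)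
    (hk : k ≤ Y.lvl) (i : ℕ) (b' : Bool) : Err (u ≫ Dm k e hk) i b' ↔ Err u i b' := by
  unfold Err
  simp only [fn_comp, kcomp]
  constructor
  · rintro ⟨hi, h⟩
    cases hu : fn u ⟨i, hi⟩ with
    | inr b' =>
      simp only [hu] at h
      exact ⟨hi, hu.trans (by rw [Sum.inr.inj h])⟩
    | inl j' =>
      simp only [hu, fn_Dm] at h
      grind
  · rintro ⟨hi, h⟩
    exact ⟨hi, by simp [h]⟩

theorem hit_id (X : VV p) (i j : ℕ) : Hit (𝟙 (O X)) i j ↔ i < X.lvl ∧ i = j := by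
  unfold Hit
  rw [fn_id]
  constructor
  · rintro ⟨hi, hj, h⟩
    exact ⟨hi, by simpa using h⟩
  · rintro ⟨hi, rfl⟩
    exact ⟨hi, hi, rfl⟩

theorem err_id (X : VV p) (i : ℕ) (b : Bool) : ¬ Err (𝟙 (O X)) i b := by
  unfold Err
  rw [fn_id]
  rintro ⟨hi, h⟩
  simp at h

/-- A word missing `k` can be rewritten so as to end with the degeneracy at `k`. -/
theorem ends_D {X Y : VV p} {n : ℕ} {u : O X ⟶ O Y} (hu : W X Y n u) :
    ∀ k, k < Y.lvl → (∀ i, ¬ Hit u i k) →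
      ∃ (Y' : VV p) (e : Y.lvl = Y'.lvl + 1) (hk : k ≤ Y'.lvl) (m : ℕ) (u' : O X ⟶ O Y'),
        W X Y' m u' ∧ n = m + 1 ∧ u = u' ≫ Dm k e hk := by
  induction hu with
  | nil =>
    intro k hk h
    exact absurd ((hit_id X k k).2 ⟨hk, rfl⟩) (h k)
  | @face Y Z n w b j e hj hw ih =>
    intro k hk h
    rcases lt_or_ge k j with hkj | hkj
    · obtain ⟨Y', e', hk', m, w', hw', rfl, rfl⟩ := ih k (by omega) (fun i hi =>
        h i ((hit_F _ _ _ _ _ _ _).2 ⟨k, hi, by omega⟩))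
      obtain ⟨V, hV⟩ := VV_pred Z (by omega)
      refine ⟨V, hV, by omega, m + 1, w' ≫ Fm b (j - 1) (by omega) (by omega),
        W.face _ _ _ _ hw', rfl, ?_⟩
      rw [Category.assoc, Category.assoc]
      congr 1
      exact DF_lt b k j _ _ _ _ _ _ hkj _ _
    · obtain ⟨Y', e', hk', m, w', hw', rfl, rfl⟩ := ih (k + 1) (by omega) (fun i hi =>
        h i ((hit_F _ _ _ _ _ _ _).2 ⟨k + 1, hi, by omega⟩))
      obtain ⟨V, hV⟩ := VV_pred Z (by omega)
      refine ⟨V, hV, by omega, m + 1, w' ≫ Fm b j (by omega) (by omega),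
        W.face _ _ _ _ hw', rfl, ?_⟩
      rw [Category.assoc, Category.assoc]
      congr 1
      exact DF_gt b (k + 1) j _ _ _ _ _ _ (by omega) _ _
  | @degen Y Z n w j e hj hw ih =>
    intro k hk h
    rcases lt_trichotomy k j with hkj | hkj | hkj
    · obtain ⟨Y', e', hk', m, w', hw', rfl, rfl⟩ := ih k (by omega) (fun i hi =>
        h i ((hit_D _ _ _ _ _ _).2 ⟨k, hi, by omega⟩))
      refine ⟨Y, e, by omega, m + 1, w' ≫ Dm (j - 1) (by omega) (by omega),
        W.degen _ _ _ hw', rfl, ?_⟩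
      rw [Category.assoc, Category.assoc]
      congr 1
      exact DD k j _ _ hkj _ _ _ _
    · subst hkj
      exact ⟨Y, e, hj, n, w, hw, rfl, rfl⟩
    · obtain ⟨Y', e', hk', m, w', hw', rfl, rfl⟩ := ih (k - 1) (by omega) (fun i hi =>
        h i ((hit_D _ _ _ _ _ _).2 ⟨k - 1, hi, by omega⟩))
      refine ⟨Y, e, by omega, m + 1, w' ≫ Dm j (by omega) (by omega),
        W.degen _ _ _ hw', rfl, ?_⟩
      rw [Category.assoc, Category.assoc]
      congr 1
      exact (DD j k _ _ hkj _ _ _ _).symm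

/-- A face can be moved to the front of a word along the preimage of its index. -/
theorem move_F {X Y : VV p} {n : ℕ} {u : O X ⟶ O Y} (hu : W X Y n u) :
    ∀ (b : Bool) (i j : ℕ), Hit u i j → ∀ (Z : VV p) (e : Y.lvl = Z.lvl + 1) (hj : j ≤ Z.lvl),
      ∃ (X' : VV p) (e' : X.lvl = X'.lvl + 1) (hi : i ≤ X'.lvl) (u' : O X' ⟶ O Z),
        u ≫ Fm b j e hj = Fm b i e' hi ≫ u' := by
  induction hu with
  | nil =>
    intro b i j h Z e hj
    obtain ⟨-, rfl⟩ := (hit_id X i j).1 h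
    exact ⟨Z, e, hj, 𝟙 _, by rw [Category.id_comp, Category.comp_id]⟩
  | @face Y Z n w b' k e hk hw ih =>
    intro b i j h V e2 hj
    obtain ⟨j', hj', hc⟩ := (hit_F _ _ _ _ _ _ _).1 h
    obtain ⟨X', e', hi, u', hu'⟩ := ih b i j' hj' Z e (by omega)
    rcases hc with ⟨h1, rfl⟩ | ⟨h1, rfl⟩
    · refine ⟨X', e', hi, u' ≫ Fm b' (k - 1) e2 (by omega), ?_⟩
      rw [← Category.assoc, ← hu', Category.assoc, Category.assoc]
      congr 1
      obtain ⟨k, rfl⟩ : ∃ t, k = t + 1 := ⟨k - 1, by omega⟩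
      exact (FF b b' j k _ _ (by omega) _ _ _ _).symm
    · refine ⟨X', e', hi, u' ≫ Fm b' k e2 (by omega), ?_⟩
      rw [← Category.assoc, ← hu', Category.assoc, Category.assoc]
      congr 1
      exact FF b' b k j _ _ (by omega) _ _ _ _
  | @degen Y Z n w k e hk hw ih =>
    intro b i j h V e2 hj
    obtain ⟨j', hj', hc⟩ := (hit_D _ _ _ _ _ _).1 h
    have hlt : j' < Y.lvl := hj'.2.1
    obtain ⟨T, hT⟩ := VV_pred Y (by omega)
    obtain ⟨X', e', hi, u', hu'⟩ := ih b i j' hj' T hT (by omega)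
    rcases hc with ⟨h1, rfl⟩ | ⟨h1, rfl⟩
    · refine ⟨X', e', hi, u' ≫ Dm (k - 1) (by omega) (by omega), ?_⟩
      rw [← Category.assoc, ← hu', Category.assoc, Category.assoc]
      congr 1
      exact DF_gt b k j _ _ _ _ _ _ (by omega) _ _
    · refine ⟨X', e', hi, u' ≫ Dm k (by omega) (by omega), ?_⟩
      rw [← Category.assoc, ← hu', Category.assoc, Category.assoc]
      congr 1
      exact DF_lt b k (j' + 1) _ _ _ _ _ _ (by omega) _ _

/-- A word producing an error at `k` can be rewritten so as to start with a face at `k`. -/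
theorem starts_F {X Y : VV p} {n : ℕ} {u : O X ⟶ O Y} (hu : W X Y n u) :
    ∀ (b : Bool) (k : ℕ), Err u k b →
      ∃ (X' : VV p) (e : X.lvl = X'.lvl + 1) (hk : k ≤ X'.lvl) (u' : O X' ⟶ O Y),
        u = Fm b k e hk ≫ u' := by
  induction hu with
  | nil =>
    intro b k h
    exact absurd h (err_id X k b)
  | @face Y Z n w b' j e hj hw ih =>
    intro b k h
    rcases (err_F _ _ _ _ _ _ _).1 h with h | ⟨h', rfl⟩
    · obtain ⟨X', e', hk, u', rfl⟩ := ih b k h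
      exact ⟨X', e', hk, u' ≫ Fm b' j e hj, Category.assoc _ _ _⟩
    · exact move_F hw b' k j h' Z e hj
  | @degen Y Z n w j e hj hw ih =>
    intro b k h
    obtain ⟨X', e', hk, u', rfl⟩ := ih b k ((err_D _ _ _ _ _ _).1 h)
    exact ⟨X', e', hk, u' ≫ Dm j e hj, Category.assoc _ _ _⟩

/-- A word without errors and misses is an identity. -/
theorem eq_id (n : ℕ) : ∀ {X Y : VV p} {u : O X ⟶ O Y}, W X Y n u →
    (∀ k b, ¬ Err u k b) → (∀ k, k < Y.lvl → ∃ i, Hit u i k) →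
      ∃ e : X = Y, u = eqToHom (congrArg O e) := by
  induction n using Nat.strong_induction_on with
  | _ n ih =>
    intro X Y u hu he hm
    cases hu with
    | nil => exact ⟨rfl, rfl⟩
    | @face Z _ n w b k e hk hw =>
      obtain ⟨Y', e', hk', m, w', hw', rfl, rfl⟩ := ends_D hw k (by omega) (fun i hi =>
        he i b ((err_F _ _ _ _ _ _ _).2 (Or.inr ⟨hi, rfl⟩)))
      obtain rfl : Y = Y' := VV_ext (by omega)
      have hcomp : (w' ≫ Dm k e' hk') ≫ Fm b k e hk = w' := by
        rw [Category.assoc, DF_self, Category.comp_id]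
      rw [hcomp] at he hm ⊢
      exact ih m (by omega) hw' he hm
    | @degen Z _ n w k e hk hw =>
      obtain ⟨i, hi⟩ := hm k (by omega)
      obtain ⟨j, -, hj⟩ := (hit_D _ _ _ _ _ _).1 hi
      omega

theorem faithful_aux (N : ℕ) : ∀ {X Y : VV p} (u v : O X ⟶ O Y), X.lvl + Y.lvl = N →
    fn u = fn v → u = v := by
  induction N using Nat.strong_induction_on with
  | _ N ih =>
    intro X Y u v hN huv
    obtain ⟨n, hu⟩ := exists_W u
    obtain ⟨m, hv⟩ := exists_W v
    by_cases he : ∃ k b, Err u k b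
    · obtain ⟨k, b, he⟩ := he
      obtain ⟨X', e, hk, u', rfl⟩ := starts_F hu b k he
      obtain ⟨X'', e', hk', v', rfl⟩ := starts_F hv b k (by unfold Err at he ⊢; rwa [← huv])
      obtain rfl : X' = X'' := VV_ext (by omega)
      congr 1
      refine ih _ ?_ u' v' rfl ?_
      · omega
      · have h1 : fn (Dm k e hk ≫ Fm b k e hk ≫ u') = fn (Dm k e hk ≫ Fm b k e hk ≫ v') := by
          rw [fn_comp, huv, ← fn_comp]
        rwa [← Category.assoc, ← Category.assoc, DF_self, Category.id_comp,
          Category.id_comp] at h1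
    by_cases hm : ∃ k, k < Y.lvl ∧ ∀ i, ¬ Hit u i k
    · obtain ⟨k, hk, hm⟩ := hm
      obtain ⟨Y', e, hk, _, u', -, -, rfl⟩ := ends_D hu k hk hm
      obtain ⟨Y'', e', hk', _, v', -, -, rfl⟩ := ends_D hv k (by omega)
        (by unfold Hit at hm ⊢; rwa [← huv])
      obtain rfl : Y' = Y'' := VV_ext (by omega)
      congr 1
      refine ih _ ?_ u' v' rfl ?_
      · omega
      · have h1 : fn ((u' ≫ Dm k e hk) ≫ Fm true k e hk) =
            fn ((v' ≫ Dm k e hk) ≫ Fm true k e hk) := by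
          rw [fn_comp, huv, ← fn_comp]
        rwa [Category.assoc, Category.assoc, DF_self, Category.comp_id,
          Category.comp_id] at h1
    · push Not at he hm
      obtain ⟨e, h1⟩ := eq_id n hu he hm
      obtain ⟨e', h2⟩ := eq_id m hv (by unfold Err at he ⊢; rwa [← huv])
        (by unfold Hit at hm ⊢; rwa [← huv])
      rw [h1, h2]

theorem BoxP_le {l₁ l₂ : ℕ} {f : Fin l₁ → Fin l₂ ⊕ Bool} (h : BoxP p l₁ l₂ f) :
    (l₁ : ℕ∞) ≤ p ∧ (l₂ : ℕ∞) ≤ p := by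
  induction h with
  | id l hl => exact ⟨hl, hl⟩
  | face b l k hk hl => exact ⟨succ_le_of_lt' hl, hl.le⟩
  | degen l k hk hl => exact ⟨hl.le, succ_le_of_lt' hl⟩
  | comp _ _ h1 h2 => exact ⟨h1.1, h2.2⟩

/-- The canonical functor on paths, with unfolded types. -/
def cmap {X Y : VV p} (g : Quiver.Path X Y) : Fin X.lvl → Fin Y.lvl ⊕ Bool :=
  @Prefunctor.map _ _ _ _ (canonicalFunctor p).toPrefunctor X Y g

theorem exists_path {l₁ l₂ : ℕ} {f : Fin l₁ → Fin l₂ ⊕ Bool} (h : BoxP p l₁ l₂ f) :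
    ∀ (h₁ : (l₁ : ℕ∞) ≤ p) (h₂ : (l₂ : ℕ∞) ≤ p),
      ∃ g : Quiver.Path (⟨l₁, h₁⟩ : VV p) ⟨l₂, h₂⟩, cmap g = f := by
  induction h with
  | id l hl => exact fun _ _ => ⟨Quiver.Path.nil, rfl⟩
  | face b l k hk hl => exact fun _ _ => ⟨fPath p b l k hk hl, rfl⟩
  | degen l k hk hl => exact fun _ _ => ⟨dPath p l k hk hl, rfl⟩
  | comp a1 a2 h1 h2 =>
    intro h₁ h₂
    obtain ⟨g1, e1⟩ := h1 h₁ (BoxP_le a1).2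
    obtain ⟨g2, e2⟩ := h2 (BoxP_le a1).2 h₂
    refine ⟨g1.comp g2, ?_⟩
    refine Eq.trans ?_ (congrArg₂ kcomp e2 e1)
    exact (canonicalFunctor p).map_comp g1 g2

theorem BoxP_cmap {X Y : VV p} (g : Quiver.Path X Y) : BoxP p X.lvl Y.lvl (cmap g) := by
  induction g with
  | nil => exact BoxP.id _ X.le
  | cons g a ih =>
    change GenArrow p _ _ at a
    cases a with
    | F b l k hk hl => exact BoxP.comp ih (BoxP.face b l k hk hl)
    | D l k hk hl => exact BoxP.comp ih (BoxP.degen l k hk hl)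

end CubeAux


/-- The canonical functor from the free category on `Q` to `□` identifies `∼`-related paths,
and the induced functor from the quotient category (the free category on `Q` modulo the
congruence generated by the five cubical relations) to `□` is faithful, with image exactly
the subcategory `□_p`. -/
theorem cube_presentation (p : ℕ∞) :
    ∃ H : ∀ (X Y : Paths (VV p)) (f g : X ⟶ Y),
        cubeRel p f g → (canonicalFunctor p).map f = (canonicalFunctor p).map g,
      (CategoryTheory.Quotient.lift (cubeRel p) (canonicalFunctor p) H).Faithful ∧
      ∀ (l₁ l₂ : ℕ) (h₁ : (l₁ : ℕ∞) ≤ p) (h₂ : (l₂ : ℕ∞) ≤ p)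
        (f : Fin l₁ → Fin l₂ ⊕ Bool),
        BoxP p l₁ l₂ f ↔
          ∃ g : Quiver.Path (⟨l₁, h₁⟩ : VV p) ⟨l₂, h₂⟩,
            @Prefunctor.map _ _ _ _ (canonicalFunctor p).toPrefunctor ⟨l₁, h₁⟩ ⟨l₂, h₂⟩ g
              = boxHom f := by
  refine ⟨cube_H p, ⟨?_⟩, ?_⟩
  · rintro ⟨X⟩ ⟨Y⟩ u v h
    exact CubeAux.faithful_aux _ u v rfl h
  · intro l₁ l₂ h₁ h₂ f
    constructor
    · exact fun h => CubeAux.exists_path h h₁ h₂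
    · rintro ⟨g, hg⟩
      have h := CubeAux.BoxP_cmap g
      have hg' : CubeAux.cmap g = f := hg
      rwa [hg'] at h
end
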